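/- The function field A always possesses a K(x)-vector-space basis V that is suitable at infinity, i.e., such that for a ∈ K[x] and B ∈ K[x]^{n×n} with aV′ = BV one has deg_x(B) < deg_x(a). -/

import Mathlib

noncomputable section
open scoped Classical
open Polynomial

/-! ### The algebraic function field `A = K(x)[y]/⟨m⟩` -/

/-- The canonical image in `A = K(x)[y]/⟨m⟩` of a polynomial `p ∈ K[x]`. -/
def toA {K : Type} [Field K] (m : Polynomial (RatFunc K)) (p : Polynomial K) :
    AdjoinRoot m :=
  algebraMap (RatFunc K) (AdjoinRoot m) (algebraMap (Polynomial K) (RatFunc K) p)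

/-- `D` is the derivation on `A = K(x)[y]/⟨m⟩` extending `d/dx` on `K(x)`:
it is additive, satisfies the Leibniz rule, and restricts to `d/dx` on `K[x]`
(hence, being a derivation on a field, on all of `K(x)`). -/
structure IsDerivationOnA {K : Type} [Field K] (m : Polynomial (RatFunc K))
    (D : AdjoinRoot m → AdjoinRoot m) : Prop where
  map_add : ∀ f g, D (f + g) = D f + D g
  leibniz : ∀ f g, D (f * g) = f * D g + g * D f
  map_poly : ∀ p : Polynomial K, D (toA m p) = toA m (Polynomial.derivative p)

/-- `W` is a basis of `A` as a vector space over `K(x)`. -/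
def IsKxBasis {K : Type} [Field K] {m : Polynomial (RatFunc K)}
    (W : Fin m.natDegree → AdjoinRoot m) : Prop :=
  LinearIndependent (RatFunc K) W ∧ Submodule.span (RatFunc K) (Set.range W) = ⊤

/-- `e W′ = M W` componentwise. -/
def DerivRel {K : Type} [Field K] {m : Polynomial (RatFunc K)}
    (D : AdjoinRoot m → AdjoinRoot m) (W : Fin m.natDegree → AdjoinRoot m)
    (e : Polynomial K) (M : Matrix (Fin m.natDegree) (Fin m.natDegree) (Polynomial K)) : Prop :=
  ∀ i, toA m e * D (W i) = ∑ j, toA m (M i j) * W j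

/-- `gcd(e, m₁₁, …, mₙₙ) = 1`: the only common divisors of `e` and the entries of `M`
are units. -/
def GcdOne {K : Type} [Field K] {n : ℕ}
    (e : Polynomial K) (M : Matrix (Fin n) (Fin n) (Polynomial K)) : Prop :=
  ∀ p : Polynomial K, p ∣ e → (∀ i j, p ∣ M i j) → IsUnit p


/-- `V` is suitable at infinity: whenever `a ∈ K[x]` and `B ∈ K[x]^{n×n}` satisfy
`aV′ = BV` (with `a ≠ 0`), one has `deg_x(B) < deg_x(a)`. -/
def SuitableAtInfinity {K : Type} [Field K] {m : Polynomial (RatFunc K)}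
    (D : AdjoinRoot m → AdjoinRoot m) (V : Fin m.natDegree → AdjoinRoot m) : Prop :=
  ∀ (a : Polynomial K) (B : Matrix (Fin m.natDegree) (Fin m.natDegree) (Polynomial K)),
    a ≠ 0 → DerivRel D V a B → ∀ i j, (B i j).degree < a.degree

/-!
Let `θ = x·d/dx`, let `O_∞ ⊆ K(x)` be the ring of functions without a pole at infinity, and let
`B` be its integral closure in `A`. On `O_∞` the derivation `θ` is logarithmic, `a ∣ θ a`, because
`θ(p/q) = (p/q)(x p'/p - x q'/q)`. If `θ` maps `B` into itself, then any `O_∞`-basis `V` of `B`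
is suitable at infinity: from `aV' = MV` one gets `x Mᵢⱼ / a ∈ O_∞`, that is `deg Mᵢⱼ < deg a`.

Stability of `B` is checked at each maximal ideal `P`, where `R = B_P` is a discrete valuation ring
with uniformizer `ϖ` and `θ R ⊆ ϖ⁻ⁿ R` for some `n`, since `B` is finite over `O_∞`. For `f ∈ R`,
let `p` be the minimal polynomial over `K` of its residue. Then `g = p(f)` lies in `ϖ R` and
`θ g = p'(f) θ f` with `p'(f)` a unit. If `s ∈ O_∞` vanishes at infinity, some power `g ^ e` is
`h s ^ a` with `h` a unit; taking logarithmic derivatives, `e θ g = g (h⁻¹ θ h + a s⁻¹ θ s)`, which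
lies in `ϖ¹⁻ⁿ R`. So `n` can be lowered to `0`.
-/

open IsLocalRing

theorem exists_aeval_mem_maximalIdeal_isUnit_aeval_derivative {K R : Type*} [Field K] [CommRing R]
    [IsLocalRing R] [Algebra K R] [Algebra.IsSeparable K (ResidueField R)] (f : R) :
    ∃ p : K[X], aeval f p ∈ maximalIdeal R ∧ IsUnit (aeval f (derivative p)) := by
  have hsep : (minpoly K (residue R f)).Separable := Algebra.IsSeparable.isSeparable K _
  have hres (p : K[X]) : residue R (aeval f p) = aeval (residue R f) p :=
    (aeval_algebraMap_apply (ResidueField R) f p).symm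
  refine ⟨minpoly K (residue R f), ?_, ?_⟩
  · rw [← residue_eq_zero_iff, hres, minpoly.aeval]
  · rw [← residue_ne_zero_iff_isUnit, hres]
    exact hsep.aeval_derivative_ne_zero (minpoly.aeval _ _)

theorem exists_associated_pow_pow {R : Type*} [CommRing R] [IsDomain R] [IsDiscreteValuationRing R]
    {s g : R} (hs0 : s ≠ 0) (hs : s ∈ maximalIdeal R) (hg0 : g ≠ 0) :
    ∃ e a : ℕ, e ≠ 0 ∧ Associated (s ^ a) (g ^ e) := by
  obtain ⟨ϖ, hϖ⟩ := IsDiscreteValuationRing.exists_irreducible R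
  obtain ⟨e, he⟩ := IsDiscreteValuationRing.associated_pow_irreducible hs0 hϖ
  obtain ⟨a, ha⟩ := IsDiscreteValuationRing.associated_pow_irreducible hg0 hϖ
  refine ⟨e, a, ?_, ?_⟩
  · rintro rfl
    exact hs (associated_one_iff_isUnit.mp (by simpa using he))
  · have hsa := he.pow_pow (n := a)
    have hge := ha.pow_pow (n := e)
    rw [← pow_mul, mul_comm] at hsa
    rw [← pow_mul] at hge
    exact hsa.trans hge.symm

section DVR

variable {K R N : Type*} [Field K] [CommRing R] [Algebra K R]
  [AddCommGroup N] [Module R N] [Module K N] (θ : Derivation K R N)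

theorem nsmul_derivation_eq_of_pow_eq [IsDomain R] [Module.IsTorsionFree R N] {s g : R}
    (hg0 : g ≠ 0) {c : N} (hθs : θ s = s • c) {e a : ℕ} (he : e ≠ 0) (h : Rˣ)
    (hge : s ^ a * h = g ^ e) :
    e • θ g = g • ((↑h⁻¹ : R) • θ h + a • c) := by
  have hθpow : θ (s ^ a) = s ^ a • a • c := by
    rcases a with _ | a
    · simp
    · rw [Derivation.leibniz_pow, hθs, Nat.add_sub_cancel, pow_succ]
      module
  have hθge : g ^ (e - 1) • e • θ g = g ^ e • ((↑h⁻¹ : R) • θ h + a • c) := by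
    rw [smul_comm, ← Derivation.leibniz_pow, ← hge, Derivation.leibniz, hθpow, smul_add,
      ← mul_smul _ (↑h⁻¹ : R), mul_assoc, h.mul_inv]
    module
  rw [← pow_sub_one_mul he, mul_smul] at hθge
  exact smul_right_injective N (pow_ne_zero (e - 1) hg0) hθge

variable [CharZero K] [IsDomain R] [IsDiscreteValuationRing R] [Module.IsTorsionFree R N]
  [Algebra.IsAlgebraic K (ResidueField R)] (M : Submodule R N)

theorem smul_derivation_mem_of_mul_smul_mem {s : R} (hs0 : s ≠ 0) (hs : s ∈ maximalIdeal R)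
    {c : N} (hc : c ∈ M) (hθs : θ s = s • c) {ϖ d : R} (hϖ : Irreducible ϖ)
    (hd : ∀ f, (ϖ * d) • θ f ∈ M) (f : R) : d • θ f ∈ M := by
  obtain ⟨p, hp, u, hu⟩ := exists_aeval_mem_maximalIdeal_isUnit_aeval_derivative (K := K) f
  set g := aeval f p with hg
  have hθg : θ g = u • θ f := by rw [hg, Derivation.map_aeval, ← hu, Units.smul_def]
  suffices d • θ g ∈ M by
    rwa [hθg, smul_comm, Submodule.smul_mem_iff'] at this
  rcases eq_or_ne g 0 with hg0 | hg0
  · simp [hg0]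
  obtain ⟨e, a, he, h, hge⟩ := exists_associated_pow_pow hs0 hs hg0
  obtain ⟨g', hg'⟩ : ϖ ∣ g := by rwa [← Ideal.mem_span_singleton, ← hϖ.maximalIdeal_eq]
  have he_unit : IsUnit (e : R) := by
    simpa using (Ne.isUnit (Nat.cast_ne_zero.mpr he : (e : K) ≠ 0)).map (algebraMap K R)
  obtain ⟨e', he'⟩ := he_unit
  have hlog : (ϖ * d) • ((↑h⁻¹ : R) • θ h + a • c) ∈ M := by
    rw [smul_add, smul_comm]
    exact M.add_mem (M.smul_mem _ (hd h)) (M.smul_mem _ (M.nsmul_mem hc a))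
  have hkey : e' • d • θ g = g' • (ϖ * d) • ((↑h⁻¹ : R) • θ h + a • c) := by
    rw [Units.smul_def, he', smul_comm, Nat.cast_smul_eq_nsmul,
      nsmul_derivation_eq_of_pow_eq θ hg0 hθs he h hge, hg']
    module
  rw [← Submodule.smul_mem_iff' M e', hkey]
  exact M.smul_mem _ hlog

theorem derivation_mem_of_smul_mem {s : R} (hs0 : s ≠ 0) (hs : s ∈ maximalIdeal R)
    {c : N} (hc : c ∈ M) (hθs : θ s = s • c) {d : R} (hd0 : d ≠ 0)
    (hd : ∀ f, d • θ f ∈ M) (f : R) : θ f ∈ M := by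
  obtain ⟨ϖ, hϖ⟩ := IsDiscreteValuationRing.exists_irreducible R
  obtain ⟨n, u, hu⟩ := IsDiscreteValuationRing.associated_pow_irreducible hd0 hϖ
  have hpow : ∀ f, ϖ ^ n • θ f ∈ M := fun f ↦ by
    rw [← hu, mul_comm, mul_smul]
    exact M.smul_mem _ (hd f)
  clear hu
  induction n generalizing f with
  | zero => simpa using hpow f
  | succ n ih =>
    refine ih f fun f ↦ ?_
    refine smul_derivation_mem_of_mul_smul_mem θ M hs0 hs hc hθs hϖ (fun f ↦ ?_) f
    rw [← pow_succ']
    exact hpow f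

end DVR

theorem isAlgebraic_quotient_of_isIntegral {K O B : Type*} [Field K] [CommRing O] [IsLocalRing O]
    [CommRing B] [Algebra K O] [Algebra K B] [Algebra O B] [IsScalarTower K O B]
    [Algebra.IsIntegral O B] [hO : Algebra.IsAlgebraic K (ResidueField O)] (P : Ideal B)
    [P.IsMaximal] : Algebra.IsAlgebraic K (B ⧸ P) := by
  have hmax : (P.comap (algebraMap O B)).IsMaximal :=
    Ideal.isMaximal_comap_of_isIntegral_of_isMaximal P
  have : P.LiesOver (maximalIdeal O) := ⟨(eq_maximalIdeal hmax).symm⟩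
  have : Algebra.IsAlgebraic K (O ⧸ maximalIdeal O) := hO
  exact Algebra.IsAlgebraic.trans K (O ⧸ maximalIdeal O) (B ⧸ P)

theorem isAlgebraic_residueField_of_isLocalization_atPrime {K B R : Type*} [Field K] [CommRing B]
    [CommRing R] [IsLocalRing R] [Algebra K B] [Algebra K R] [Algebra B R] [IsScalarTower K B R]
    (P : Ideal B) [P.IsMaximal] [IsLocalization.AtPrime R P] [Algebra.IsAlgebraic K (B ⧸ P)] :
    Algebra.IsAlgebraic K (ResidueField R) := by
  let e : (B ⧸ P) ≃ₐ[K] ResidueField R :=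
    AlgEquiv.ofRingEquiv (f := IsLocalization.AtPrime.equivQuotMaximalIdeal P R) fun k ↦
      congrArg (residue R) (IsScalarTower.algebraMap_apply K B R k).symm
  exact e.isAlgebraic

theorem smul_derivation_mem_of_isLocalization {K B R N : Type*} [CommRing K] [CommRing B]
    [CommRing R] [Algebra K R] [Algebra B R] [AddCommGroup N] [Module R N] [Module K N]
    (S : Submonoid B) [IsLocalization S R] (θ : Derivation K R N) (M : Submodule R N) {d : R}
    (hd : ∀ b : B, d • θ (algebraMap B R b) ∈ M) (f : R) : d • θ f ∈ M := by
  obtain ⟨⟨b, t⟩, hbt⟩ := IsLocalization.surj S f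
  obtain ⟨u, hu⟩ := IsLocalization.map_units R t
  have hdu : u • d • θ f = d • θ (algebraMap B R b) - f • d • θ (algebraMap B R t) := by
    rw [← hbt, Derivation.leibniz, Units.smul_def, hu]
    module
  rw [← Submodule.smul_mem_iff' M u, hdu]
  exact M.sub_mem (hd b) (M.smul_mem f (hd t))

section Dedekind

variable {K B L : Type*} [Field K] [CharZero K] [CommRing B] [IsDedekindDomain B] [Field L]
  [Algebra K B] [Algebra B L] [Algebra K L] [IsFractionRing B L]
  (θ : Derivation K L L)

theorem derivation_mem_range_of_isLocalization_atPrime {R : Type*} [CommRing R] [IsDomain R]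
    [Algebra K R] [Algebra B R] [Algebra R L] [IsScalarTower K B R] [IsScalarTower B R L]
    [IsScalarTower K R L] (P : Ideal B) [P.IsMaximal] [IsLocalization.AtPrime R P]
    [Algebra.IsAlgebraic K (B ⧸ P)]
    {s c : B} (hs0 : s ≠ 0) (hs : s ∈ P) (hθs : θ (algebraMap B L s) = algebraMap B L (s * c))
    {d : B} (hd0 : d ≠ 0) (hd : ∀ b : B, d • θ (algebraMap B L b) ∈ (algebraMap B L).range)
    (f : R) : θ (algebraMap R L f) ∈ (algebraMap R L).range := by
  have hBR : Function.Injective (algebraMap B R) :=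
    IsLocalization.injective R P.primeCompl_le_nonZeroDivisors
  have : IsLocalRing R := IsLocalization.AtPrime.isLocalRing R P
  have : IsDiscreteValuationRing R :=
    IsLocalization.AtPrime.isDiscreteValuationRing_of_dedekind_domain B
      (ne_of_mem_of_not_mem' hs (by simpa using hs0)) R
  have : Algebra.IsAlgebraic K (ResidueField R) :=
    isAlgebraic_residueField_of_isLocalization_atPrime P
  have : IsFractionRing R L :=
    IsFractionRing.isFractionRing_of_isDomain_of_isLocalization P.primeCompl R L
  have hM (x : L) : x ∈ (1 : Submodule R L) ↔ x ∈ (algebraMap R L).range := Submodule.mem_one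
  have htower (b : B) : algebraMap R L (algebraMap B R b) = algebraMap B L b :=
    (IsScalarTower.algebraMap_apply B R L b).symm
  rw [← hM]
  refine derivation_mem_of_smul_mem (θ.compAlgebraMap R) 1 (s := algebraMap B R s)
    (c := algebraMap B L c) (d := algebraMap B R d) ?_ ?_ ?_ ?_ ?_ ?_ f
  · exact (map_ne_zero_iff _ hBR).mpr hs0
  · exact (IsLocalization.AtPrime.to_map_mem_maximal_iff R P s).mpr hs
  · exact (hM _).mpr ⟨algebraMap B R c, htower c⟩
  · change θ (algebraMap R L (algebraMap B R s)) = _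
    rw [htower, hθs, map_mul, Algebra.smul_def, htower]
  · exact (map_ne_zero_iff _ hBR).mpr hd0
  · refine smul_derivation_mem_of_isLocalization P.primeCompl _ 1 fun b ↦ ?_
    change algebraMap B R d • θ (algebraMap R L (algebraMap B R b)) ∈ _
    obtain ⟨x, hx⟩ := hd b
    rw [htower, algebraMap_smul, ← hx, hM]
    exact ⟨algebraMap B R x, htower x⟩

theorem derivation_mem_range_of_isDedekindDomain [IsScalarTower K B L]
    (hres : ∀ P : Ideal B, P.IsMaximal → Algebra.IsAlgebraic K (B ⧸ P))
    {s c : B} (hs0 : s ≠ 0) (hs : s ∈ (⊥ : Ideal B).jacobson)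
    (hθs : θ (algebraMap B L s) = algebraMap B L (s * c)) {d : B} (hd0 : d ≠ 0)
    (hd : ∀ b : B, d • θ (algebraMap B L b) ∈ (algebraMap B L).range) (b : B) :
    θ (algebraMap B L b) ∈ (algebraMap B L).range := by
  suffices θ (algebraMap B L b) ∈ (⊥ : Subalgebra B L) from Algebra.mem_bot.mp this
  rw [← MaximalSpectrum.iInf_localization_eq_bot B L, Algebra.mem_iInf]
  rintro ⟨P, hP⟩
  have : Algebra.IsAlgebraic K (B ⧸ P) := hres P hP
  have hsP : s ∈ P := Ideal.mem_sInf.mp hs ⟨bot_le, hP⟩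
  let R := Localization.subalgebra.ofField L P.primeCompl P.primeCompl_le_nonZeroDivisors
  have : IsLocalization.AtPrime R P := Localization.subalgebra.isLocalization_ofField L _ _
  obtain ⟨f, hf⟩ := derivation_mem_range_of_isLocalization_atPrime θ P hs0 hsP hθs hd0 hd
    (algebraMap B R b)
  rw [← IsScalarTower.algebraMap_apply] at hf
  exact hf ▸ f.2

end Dedekind

section Finite

variable {K O B L : Type*} [CommRing O] [CommRing B] [Field L] [Algebra O B] [Algebra B L]
  [Algebra O L] [IsScalarTower O B L] [IsFractionRing B L] [Module.Finite O B]

theorem exists_smul_derivation_mem_range [CommRing K] [IsDomain B] [Algebra K L]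
    (θ : Derivation K L L)
    (hθ : ∀ a : O, θ (algebraMap O L a) ∈ (algebraMap B L).range) :
    ∃ d : B, d ≠ 0 ∧ ∀ b : B, d • θ (algebraMap B L b) ∈ (algebraMap B L).range := by
  obtain ⟨T, hT⟩ := (Module.Finite.fg_top : (⊤ : Submodule O B).FG)
  obtain ⟨d, hd⟩ := IsLocalization.exist_integer_multiples_of_finset (nonZeroDivisors B)
    (T.image fun b ↦ θ (algebraMap B L b))
  refine ⟨d, nonZeroDivisors.coe_ne_zero d, fun b ↦ ?_⟩
  have hb : b ∈ Submodule.span O (T : Set B) := hT ▸ Submodule.mem_top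
  induction hb using Submodule.span_induction with
  | mem x hx => exact hd _ (Finset.mem_image_of_mem _ hx)
  | zero => simp
  | add x y _ _ hx hy =>
    rw [map_add, map_add, smul_add]
    exact add_mem hx hy
  | smul a x _ hx =>
    have hax : (d : B) • θ (algebraMap B L (a • x)) =
        algebraMap B L (algebraMap O B a) * (d : B) • θ (algebraMap B L x) +
          algebraMap B L (d * x) * θ (algebraMap O L a) := by
      rw [Algebra.smul_def a x, map_mul, ← IsScalarTower.algebraMap_apply, Derivation.leibniz,
        smul_eq_mul, smul_eq_mul]
      simp only [Algebra.smul_def, map_mul]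
      ring
    rw [hax]
    exact add_mem (mul_mem ⟨_, rfl⟩ hx) (mul_mem ⟨_, rfl⟩ (hθ a))

theorem derivation_mem_range_of_isLocalRing [Field K] [CharZero K] [IsLocalRing O]
    [IsDedekindDomain B] [Algebra K O] [Algebra K B] [Algebra K L]
    [IsScalarTower K O B] [IsScalarTower K B L] [FaithfulSMul O B]
    [Algebra.IsAlgebraic K (ResidueField O)] (hO : ¬ IsField O) (θ : Derivation K L L)
    (hθ : ∀ a : O, ∃ c : O, θ (algebraMap O L a) = algebraMap O L (a * c)) (b : B) :
    θ (algebraMap B L b) ∈ (algebraMap B L).range := by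
  obtain ⟨s, hs, hs0⟩ := (Submodule.ne_bot_iff _).mp
    (mt isField_iff_maximalIdeal_eq.mpr hO)
  obtain ⟨c, hc⟩ := hθ s
  have hOBL (a : O) : algebraMap B L (algebraMap O B a) = algebraMap O L a :=
    (IsScalarTower.algebraMap_apply O B L a).symm
  obtain ⟨d, hd0, hd⟩ := exists_smul_derivation_mem_range (B := B) θ fun a ↦ by
    obtain ⟨c, hc⟩ := hθ a
    exact ⟨_, (hOBL _).trans hc.symm⟩
  refine derivation_mem_range_of_isDedekindDomain θ (s := algebraMap O B s)
    (c := algebraMap O B c) (fun P _ ↦ isAlgebraic_quotient_of_isIntegral (O := O) P) ?_ ?_ ?_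
    hd0 hd b
  · exact (map_ne_zero_iff _ (FaithfulSMul.algebraMap_injective O B)).mpr hs0
  · refine Ideal.mem_sInf.mpr fun {P} ⟨_, hP⟩ ↦ ?_
    have hmax : (P.comap (algebraMap O B)).IsMaximal :=
      Ideal.isMaximal_comap_of_isIntegral_of_isMaximal P
    rwa [← eq_maximalIdeal hmax] at hs
  · rw [hOBL, hc, ← map_mul, hOBL]

end Finite

section IntegralClosure

variable {O F L : Type*} [CommRing O] [IsDomain O] [Field F] [Field L] [Algebra O F]
  [IsFractionRing O F] [Algebra O L] [Algebra F L] [IsScalarTower O F L] [FiniteDimensional F L]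

theorem exists_basis_isIntegral_repr_mem_range [Algebra.IsSeparable F L] [IsIntegrallyClosed O]
    [IsPrincipalIdealRing O] {n : ℕ} (hn : Module.finrank F L = n) :
    ∃ b : Module.Basis (Fin n) F L, (∀ i, IsIntegral O (b i)) ∧
      ∀ f, IsIntegral O f → ∀ j, b.repr f j ∈ (algebraMap O F).range := by
  let B := integralClosure O L
  have : Module.IsTorsionFree O L := Module.IsTorsionFree.trans_faithfulSMul O F L
  have : Module.Finite O B := IsIntegralClosure.finite O F L B
  have : Module.Free O B := IsIntegralClosure.module_free O F L B
  have : IsLocalization (Algebra.algebraMapSubmonoid B (nonZeroDivisors O)) L :=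
    IsIntegralClosure.isLocalization O F L B
  let b₀ : Module.Basis (Fin n) O B :=
    Module.finBasisOfFinrankEq O B ((IsIntegralClosure.rank O F L B).trans hn)
  refine ⟨b₀.localizationLocalization F (nonZeroDivisors O) L, fun i ↦ ?_, fun f hf j ↦ ?_⟩
  · rw [Module.Basis.localizationLocalization_apply]
    exact (b₀ i).2
  · exact ⟨b₀.repr ⟨f, hf⟩ j,
      (b₀.localizationLocalization_repr_algebraMap F (nonZeroDivisors O) L ⟨f, hf⟩ j).symm⟩

theorem isIntegral_derivation {K : Type*} [Field K] [CharZero K] [IsDiscreteValuationRing O]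
    [Algebra K O] [Algebra K L] [IsScalarTower K O L] [Algebra.IsAlgebraic K (ResidueField O)]
    [Algebra.IsSeparable F L] (θ : Derivation K L L)
    (hθ : ∀ a : O, ∃ c : O, θ (algebraMap O L a) = algebraMap O L (a * c))
    {f : L} (hf : IsIntegral O f) : IsIntegral O (θ f) := by
  let B := integralClosure O L
  have : IsFractionRing B L := IsIntegralClosure.isFractionRing_of_finite_extension O F L B
  have : IsDedekindDomain B := IsIntegralClosure.isDedekindDomain O F L B
  have : Module.Finite O B := IsIntegralClosure.finite O F L B
  have : FaithfulSMul O L := .trans O F L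
  have : FaithfulSMul O B := .tower_bot O B L
  obtain ⟨g, hg⟩ := derivation_mem_range_of_isLocalRing (B := B)
    (IsDiscreteValuationRing.not_isField O) θ hθ ⟨f, hf⟩
  exact hg ▸ g.2

end IntegralClosure

section InftyIntegers

variable {K : Type*} [Field K]

/-- The ring `O_∞ ⊆ K(x)` of rational functions without a pole at infinity. -/
abbrev inftyIntegers (K : Type*) [Field K] : ValuationSubring (RatFunc K) :=
  (RatFunc.inftyValuation K).valuationSubring

instance : Algebra K (inftyIntegers K) :=
  ((algebraMap K (RatFunc K)).codRestrict (inftyIntegers K).toSubring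
    (Valuation.IsTrivialOn.valuation_algebraMap_le_one (RatFunc.inftyValuation K))).toAlgebra

instance : IsScalarTower K (inftyIntegers K) (RatFunc K) := .of_algebraMap_eq fun _ ↦ rfl

theorem inftyValuation_div {p q : K[X]} (hp : p ≠ 0) (hq : q ≠ 0) :
    RatFunc.inftyValuation K (algebraMap K[X] (RatFunc K) p / algebraMap K[X] (RatFunc K) q) =
      WithZero.exp (p.natDegree - q.natDegree : ℤ) := by
  rw [map_div₀, RatFunc.inftyValuation_apply, RatFunc.inftyValuation_apply,
    RatFunc.inftyValuation.polynomial _ hp, RatFunc.inftyValuation.polynomial _ hq,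
    WithZero.exp_sub]

theorem div_mem_inftyIntegers_iff {p q : K[X]} (hq : q ≠ 0) :
    algebraMap K[X] (RatFunc K) p / algebraMap K[X] (RatFunc K) q ∈ inftyIntegers K ↔
      p.degree ≤ q.degree := by
  rcases eq_or_ne p 0 with rfl | hp
  · simp
  rw [Valuation.mem_valuationSubring_iff, inftyValuation_div hp hq, ← WithZero.exp_zero,
    WithZero.exp_le_exp, sub_nonpos, Nat.cast_le, degree_eq_natDegree hp, degree_eq_natDegree hq,
    Nat.cast_le]

theorem inftyValuation_div_lt_one_iff {p q : K[X]} (hq : q ≠ 0) :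
    RatFunc.inftyValuation K (algebraMap K[X] (RatFunc K) p / algebraMap K[X] (RatFunc K) q) < 1 ↔
      p.degree < q.degree := by
  rcases eq_or_ne p 0 with rfl | hp
  · simp [bot_lt_iff_ne_bot, hq]
  rw [inftyValuation_div hp hq, ← WithZero.exp_zero, WithZero.exp_lt_exp, sub_neg, Nat.cast_lt,
    degree_eq_natDegree hp, degree_eq_natDegree hq, Nat.cast_lt]

theorem exists_degree_sub_C_mul_lt {p q : K[X]} (hq : q.Monic) (hpq : p.degree ≤ q.degree) :
    ∃ k : K, (p - C k * q).degree < q.degree := by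
  obtain ⟨k, hk⟩ : ∃ k, C k = p /ₘ q := by
    rw [← natDegree_eq_zero, natDegree_divByMonic _ hq,
      Nat.sub_eq_zero_of_le (natDegree_le_natDegree hpq)]
  refine ⟨k, ?_⟩
  rw [hk, mul_comm, ← modByMonic_eq_sub_mul_div]
  exact degree_modByMonic_lt p hq

theorem algebraMap_residueField_inftyIntegers_surjective :
    Function.Surjective (algebraMap K (ResidueField (inftyIntegers K))) := by
  intro z
  obtain ⟨⟨f, hf⟩, rfl⟩ := residue_surjective z
  have hden : algebraMap K[X] (RatFunc K) f.denom ≠ 0 := by simpa using f.denom_ne_zero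
  have hdeg : f.num.degree ≤ f.denom.degree := by
    rwa [← div_mem_inftyIntegers_iff f.denom_ne_zero, RatFunc.num_div_denom]
  obtain ⟨k, hk⟩ := exists_degree_sub_C_mul_lt f.monic_denom hdeg
  refine ⟨k, ?_⟩
  have hsub : algebraMap K (RatFunc K) k - f =
      -(algebraMap K[X] (RatFunc K) (f.num - C k * f.denom) /
        algebraMap K[X] (RatFunc K) f.denom) := by
    rw [map_sub, map_mul, sub_div, mul_div_cancel_right₀ _ hden, RatFunc.num_div_denom, neg_sub]
    rfl
  change residue _ (algebraMap K _ k) = _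
  rw [← sub_eq_zero, ← map_sub, residue_eq_zero_iff, Valuation.mem_maximalIdeal_iff]
  change RatFunc.inftyValuation K (algebraMap K (RatFunc K) k - f) < 1
  rw [hsub, Valuation.map_neg]
  exact (inftyValuation_div_lt_one_iff f.denom_ne_zero).mpr hk

instance : Algebra.IsAlgebraic K (ResidueField (inftyIntegers K)) :=
  have := Algebra.isIntegral_of_surjective
    (algebraMap_residueField_inftyIntegers_surjective (K := K))
  Algebra.IsIntegral.isAlgebraic

theorem X_mul_derivative_div_mem_inftyIntegers (p : K[X]) :
    algebraMap K[X] (RatFunc K) (X * derivative p) / algebraMap K[X] (RatFunc K) p ∈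
      inftyIntegers K := by
  rcases eq_or_ne p 0 with rfl | hp
  · simp
  rw [div_mem_inftyIntegers_iff hp, X_mul, degree_mul_X]
  exact Nat.WithBot.add_one_le_of_lt (degree_derivative_lt hp)

theorem exists_mem_inftyIntegers_derivation_eq_mul {L : Type*} [Field L] [Algebra (RatFunc K) L]
    [Algebra K[X] L] [IsScalarTower K[X] (RatFunc K) L] [Algebra K L] (θ : Derivation K L L)
    (hθ : ∀ p : K[X], θ (algebraMap K[X] L p) = algebraMap K[X] L (X * derivative p))
    (f : RatFunc K) :
    ∃ c ∈ inftyIntegers K, θ (algebraMap (RatFunc K) L f) = algebraMap (RatFunc K) L (f * c) := by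
  let logDeriv (p : K[X]) : RatFunc K :=
    algebraMap K[X] (RatFunc K) (X * derivative p) / algebraMap K[X] (RatFunc K) p
  have hpoly (p : K[X]) (hp : p ≠ 0) : θ (algebraMap K[X] L p) =
      algebraMap K[X] L p * algebraMap (RatFunc K) L (logDeriv p) := by
    have hp' : algebraMap K[X] (RatFunc K) p ≠ 0 := by simpa using hp
    rw [hθ, IsScalarTower.algebraMap_apply K[X] (RatFunc K) L p, ← map_mul, mul_div_cancel₀ _ hp',
      ← IsScalarTower.algebraMap_apply]
  rcases eq_or_ne f 0 with rfl | hf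
  · exact ⟨0, zero_mem _, by simp⟩
  refine ⟨logDeriv f.num - logDeriv f.denom,
    sub_mem (X_mul_derivative_div_mem_inftyIntegers _) (X_mul_derivative_div_mem_inftyIntegers _),
    ?_⟩
  have hden : algebraMap K[X] L f.denom ≠ 0 := by
    rw [IsScalarTower.algebraMap_apply K[X] (RatFunc K) L]
    simpa using f.denom_ne_zero
  have hfdiv : algebraMap (RatFunc K) L f =
      algebraMap K[X] L f.num / algebraMap K[X] L f.denom := by
    rw [IsScalarTower.algebraMap_apply K[X] (RatFunc K) L,
      IsScalarTower.algebraMap_apply K[X] (RatFunc K) L, ← map_div₀, RatFunc.num_div_denom]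
  rw [map_mul, map_sub, hfdiv, Derivation.leibniz_div, hpoly _ (RatFunc.num_ne_zero hf),
    hpoly _ f.denom_ne_zero]
  simp only [smul_eq_mul]
  field_simp

theorem exists_basis_repr_derivation_mem_inftyIntegers [CharZero K] {L : Type*} [Field L]
    [Algebra (RatFunc K) L] [FiniteDimensional (RatFunc K) L] [Algebra K[X] L]
    [IsScalarTower K[X] (RatFunc K) L] [Algebra K L] [IsScalarTower K (RatFunc K) L]
    (θ : Derivation K L L)
    (hθ : ∀ p : K[X], θ (algebraMap K[X] L p) = algebraMap K[X] L (X * derivative p))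
    {n : ℕ} (hn : Module.finrank (RatFunc K) L = n) :
    ∃ b : Module.Basis (Fin n) (RatFunc K) L, ∀ i j, b.repr (θ (b i)) j ∈ inftyIntegers K := by
  have : CharZero (RatFunc K) := charZero_of_injective_algebraMap (algebraMap K _).injective
  have : IsScalarTower K (inftyIntegers K) L :=
    IsScalarTower.to₁₂₄ K (inftyIntegers K) (RatFunc K) L
  obtain ⟨b, hb, hrepr⟩ := exists_basis_isIntegral_repr_mem_range (O := inftyIntegers K) hn
  refine ⟨b, fun i j ↦ ?_⟩
  have hlog (f : inftyIntegers K) : ∃ c : inftyIntegers K,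
      θ (algebraMap _ L f) = algebraMap _ L (f * c) := by
    obtain ⟨c, hc, hfc⟩ := exists_mem_inftyIntegers_derivation_eq_mul θ hθ f
    exact ⟨⟨c, hc⟩, hfc⟩
  obtain ⟨c, hc⟩ := hrepr _ (isIntegral_derivation (F := RatFunc K) θ hlog (hb i)) j
  exact hc ▸ c.2

end InftyIntegers

section FunctionField

variable {K : Type} [Field K] {m : Polynomial (RatFunc K)} {D : AdjoinRoot m → AdjoinRoot m}

/-- The `K`-linear derivation of `A` underlying a map `D` that extends `d/dx`. -/
def IsDerivationOnA.toDerivation (hD : IsDerivationOnA m D) :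
    Derivation K (AdjoinRoot m) (AdjoinRoot m) :=
  .mk'
    { toFun := D
      map_add' := hD.map_add
      map_smul' := fun k f ↦ by
        have hk : D (algebraMap K (AdjoinRoot m) k) = 0 := by
          have hC := hD.map_poly (C k)
          rwa [derivative_C, toA, toA, map_zero, map_zero] at hC
        rw [Algebra.smul_def, hD.leibniz, hk, mul_zero, add_zero, ← Algebra.smul_def]
        rfl }
    hD.leibniz

theorem suitableAtInfinity_of_repr_mem_inftyIntegers
    (b : Module.Basis (Fin m.natDegree) (RatFunc K) (AdjoinRoot m))
    (hb : ∀ i j, b.repr (toA m X * D (b i)) j ∈ inftyIntegers K) : SuitableAtInfinity D b := by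
  intro a M ha hM i j
  have ha' : algebraMap K[X] (RatFunc K) a ≠ 0 := by simpa using ha
  have hrepr : b.repr (toA m X * D (b i)) j =
      algebraMap K[X] (RatFunc K) (M i j * X) / algebraMap K[X] (RatFunc K) a := by
    have hsum : algebraMap K[X] (RatFunc K) a • D (b i) =
        ∑ j, algebraMap K[X] (RatFunc K) (M i j) • b j := by
      simpa only [Algebra.smul_def, toA] using hM i
    have hMij : algebraMap K[X] (RatFunc K) a * b.repr (D (b i)) j =
        algebraMap K[X] (RatFunc K) (M i j) := by
      simpa only [map_smul, b.repr_sum_self, Finsupp.smul_apply, smul_eq_mul] using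
        congrArg (b.repr · j) hsum
    rw [toA, ← Algebra.smul_def, map_smul, Finsupp.smul_apply, smul_eq_mul, map_mul, ← hMij]
    field_simp
  have hdeg : (M i j * X).degree ≤ a.degree := by
    rw [← div_mem_inftyIntegers_iff ha, ← hrepr]
    exact hb i j
  rcases eq_or_ne (M i j) 0 with h0 | h0
  · rw [h0, degree_zero, bot_lt_iff_ne_bot]
    exact degree_ne_bot.mpr ha
  · exact (degree_lt_degree_mul_X h0).trans_le hdeg

end FunctionField

/-- The function field `A` always possesses a `K(x)`-vector-space basis `V`
that is suitable at infinity, i.e., such that for `a ∈ K[x]` and `B ∈ K[x]^{n×n}` with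
`aV′ = BV` one has `deg_x(B) < deg_x(a)`. -/
theorem exists_basis_suitableAtInfinity {K : Type} [Field K] [CharZero K]
    (m : Polynomial (RatFunc K)) [Fact (Irreducible m)]
    (D : AdjoinRoot m → AdjoinRoot m) (hD : IsDerivationOnA m D) :
    ∃ V : Fin m.natDegree → AdjoinRoot m, IsKxBasis V ∧ SuitableAtInfinity D V := by
  let pb := AdjoinRoot.powerBasis (Fact.out : Irreducible m).ne_zero
  have : FiniteDimensional (RatFunc K) (AdjoinRoot m) := pb.finite
  let θ : Derivation K (AdjoinRoot m) (AdjoinRoot m) := toA m X • hD.toDerivation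
  have hθ (p : K[X]) : θ (algebraMap K[X] _ p) = algebraMap K[X] _ (X * derivative p) := by
    rw [map_mul]
    exact congrArg (toA m X * ·) (hD.map_poly p)
  obtain ⟨b, hb⟩ := exists_basis_repr_derivation_mem_inftyIntegers θ hθ pb.finrank
  exact ⟨b, ⟨b.linearIndependent, b.span_eq⟩, suitableAtInfinity_of_repr_mem_inftyIntegers b hb⟩
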